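/- arXiv:1805.03978 — 8 statements merged into one kernel-verified Lean document; each statement's English description precedes it below -/
import Mathlib

section
/- Let n ≥ 2, let Ω ⊆ ℝⁿ be open, let τ ∈ ℝ, α, β : Fin n → ℝ, and let Φ, F : ℝ → ℝ be smooth. If Φ and F satisfy the reduced ODE system at every s in the image q(Ω), then the functions φ = Φ ∘ q and f = F ∘ q satisfy the conformal soliton system on Ω. (This is the 'if' direction of Theorem 1.2.) -/
noncomputable def pd {n : ℕ} (i : Fin n) (u : (Fin n → ℝ) → ℝ) (x : Fin n → ℝ) : ℝ :=
  fderiv ℝ u x (Pi.single i 1)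

/-- The PDE system characterizing gradient Ricci solitons conformal to
pseudo-Euclidean space (Barbosa–Pina–Tenenblat). -/
def SolitonSystem (n : ℕ) (ε : Fin n → ℝ) (Ω : Set (Fin n → ℝ))
    (φ f : (Fin n → ℝ) → ℝ) (lam : ℝ) : Prop :=
  (∀ i j : Fin n, i ≠ j → ∀ x ∈ Ω,
    ((n : ℝ) - 2) * pd i (pd j φ) x + φ x * pd i (pd j f) x
      + pd i φ x * pd j f x + pd j φ x * pd i f x = 0) ∧
  (∀ i : Fin n, ∀ x ∈ Ω,
    φ x * (((n : ℝ) - 2) * pd i (pd i φ) x + φ x * pd i (pd i f) x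
        + 2 * pd i φ x * pd i f x)
      + ε i * ∑ k, ε k * (φ x * pd k (pd k φ) x - ((n : ℝ) - 1) * (pd k φ x) ^ 2
        - φ x * pd k φ x * pd k f x) = ε i * lam)

/-- The reduced ODE system. -/
def ReducedODE (n : ℕ) (τ Λ lam : ℝ) (Φ F : ℝ → ℝ) (s : ℝ) : Prop :=
  ((n : ℝ) - 2) * deriv (deriv Φ) s + Φ s * deriv (deriv F) s
      + 2 * deriv Φ s * deriv F s = 0 ∧
  2 * τ * Φ s * (2 * ((n : ℝ) - 1) * deriv Φ s + Φ s * deriv F s)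
    + (Φ s * deriv (deriv Φ) s - ((n : ℝ) - 1) * (deriv Φ s) ^ 2
      - Φ s * deriv Φ s * deriv F s) * (4 * τ * s + Λ) = lam

/-!
For any `q`, the chain rule turns each of the two second-order expressions making up the soliton
system for `Φ ∘ q`, `F ∘ q` into a combination of `∂ᵢq ∂ⱼq` and `∂ᵢ∂ⱼq` whose coefficients are
functions of `q`. The quadratic `q` of the theorem has `∂ᵢ∂ⱼq = 2 τ εᵢ δᵢⱼ` and
`∑ₖ εₖ (∂ₖq)² = 4 τ q + Λ`, so the off-diagonal equations become `∂ᵢq ∂ⱼq` times the first reduced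
equation, and the diagonal ones become `Φ (∂ᵢq)²` times the first plus `εᵢ` times the second.
-/

section PartialDerivatives

open Filter Topology

variable {n : ℕ} {x : Fin n → ℝ}

theorem pd_coord (i j : Fin n) (x : Fin n → ℝ) :
    pd i (fun y => y j) x = if i = j then 1 else 0 := by
  simp [pd, (hasFDerivAt_apply j x).fderiv, Pi.single_apply, eq_comm]

theorem pd_sum {ι : Type*} {s : Finset ι} {u : ι → (Fin n → ℝ) → ℝ}
    (hu : ∀ k ∈ s, DifferentiableAt ℝ (u k) x) (i : Fin n) :
    pd i (fun y => ∑ k ∈ s, u k y) x = ∑ k ∈ s, pd i (u k) x := by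
  simp [pd, fderiv_fun_sum hu]

theorem pd_mul {u v : (Fin n → ℝ) → ℝ} (hu : DifferentiableAt ℝ u x)
    (hv : DifferentiableAt ℝ v x) (i : Fin n) :
    pd i (fun y => u y * v y) x = u x * pd i v x + v x * pd i u x := by
  simp [pd, fderiv_fun_mul hu hv]

theorem pd_comp {G : ℝ → ℝ} {q : (Fin n → ℝ) → ℝ} (hG : DifferentiableAt ℝ G (q x))
    (hq : DifferentiableAt ℝ q x) (i : Fin n) :
    pd i (G ∘ q) x = deriv G (q x) * pd i q x := by
  simp [pd, (hG.hasDerivAt.comp_hasFDerivAt x hq.hasFDerivAt).fderiv]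

theorem differentiableAt_pd {u : (Fin n → ℝ) → ℝ} (hu : ContDiffAt ℝ 2 u x) (i : Fin n) :
    DifferentiableAt ℝ (pd i u) x :=
  ((hu.fderiv_right (m := 1) le_rfl).differentiableAt one_ne_zero).clm_apply
    (differentiableAt_const _)

theorem pd_pd_comp {G : ℝ → ℝ} {q : (Fin n → ℝ) → ℝ} (hG : ContDiffAt ℝ 2 G (q x))
    (hq : ContDiffAt ℝ 2 q x) (i j : Fin n) :
    pd i (pd j (G ∘ q)) x =
      deriv (deriv G) (q x) * (pd i q x * pd j q x) + deriv G (q x) * pd i (pd j q) x := by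
  have hq' : DifferentiableAt ℝ q x := hq.differentiableAt two_ne_zero
  have hG' : DifferentiableAt ℝ (deriv G) (q x) :=
    (hG.derivWithin (m := 1) le_rfl).differentiableAt one_ne_zero
  have pd_comp_near : pd j (G ∘ q) =ᶠ[𝓝 x] fun y => (deriv G ∘ q) y * pd j q y := by
    filter_upwards [hq.eventually (by simp), hq'.continuousAt.eventually (hG.eventually (by simp))]
      with y hqy hGy
    exact pd_comp (hGy.differentiableAt two_ne_zero) (hqy.differentiableAt two_ne_zero) j
  calc pd i (pd j (G ∘ q)) x = pd i (fun y => (deriv G ∘ q) y * pd j q y) x := by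
        rw [pd, pd_comp_near.fderiv_eq, pd]
    _ = deriv G (q x) * pd i (pd j q) x + pd j q x * pd i (deriv G ∘ q) x :=
        pd_mul (hG'.comp x hq') (differentiableAt_pd hq j) i
    _ = _ := by rw [pd_comp hG' hq']; ring

end PartialDerivatives

section DiagonalQuadratic

variable {n : ℕ}

/-- The quadratic polynomial `∑ₖ (aₖ xₖ² + bₖ xₖ + cₖ)` on `ℝⁿ`, without mixed terms. The function
`q` of the theorem is the case `a = τ ε`. -/
def diagQuadratic (a b c : Fin n → ℝ) (x : Fin n → ℝ) : ℝ :=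
  ∑ k, (a k * x k ^ 2 + b k * x k + c k)

theorem contDiff_diagQuadratic (a b c : Fin n → ℝ) {m : WithTop ℕ∞} :
    ContDiff ℝ m (diagQuadratic a b c) := by
  unfold diagQuadratic
  fun_prop

theorem pd_diagQuadratic (a b c : Fin n → ℝ) (i : Fin n) :
    pd i (diagQuadratic a b c) = fun x => 2 * a i * x i + b i := by
  ext x
  have deriv_summand (k : Fin n) (t : ℝ) :
      deriv (fun t => a k * t ^ 2 + b k * t + c k) t = 2 * a k * t + b k := by
    have h := ((hasDerivAt_pow 2 t).const_mul (a k)).fun_add ((hasDerivAt_id' t).const_mul (b k))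
    simpa [mul_assoc, mul_left_comm] using (h.add_const (c k)).deriv
  have pd_summand (k : Fin n) : pd i (fun y => a k * y k ^ 2 + b k * y k + c k) x =
      (2 * a k * x k + b k) * if i = k then 1 else 0 := by
    rw [← pd_coord, ← deriv_summand]
    exact pd_comp (G := fun t => a k * t ^ 2 + b k * t + c k) (q := fun y => y k)
      (by fun_prop) (by fun_prop) i
  unfold diagQuadratic
  rw [pd_sum (by fun_prop)]
  simp [pd_summand]

theorem pd_pd_diagQuadratic (a b c : Fin n → ℝ) (i j : Fin n) (x : Fin n → ℝ) :
    pd i (pd j (diagQuadratic a b c)) x = if i = j then 2 * a j else 0 := by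
  rw [pd_diagQuadratic]
  refine (pd_comp (G := fun t => 2 * a j * t + b j) (q := fun y => y j)
    (by fun_prop) (by fun_prop) i).trans ?_
  simp [pd_coord]

theorem sum_sign_mul_pd_diagQuadratic_sq {ε : Fin n → ℝ} (hε : ∀ k, ε k ^ 2 = 1) (τ : ℝ)
    (α β : Fin n → ℝ) (x : Fin n → ℝ) :
    ∑ k, ε k * pd k (diagQuadratic (fun k => τ * ε k) α β) x ^ 2 =
      4 * τ * diagQuadratic (fun k => τ * ε k) α β x
        + ∑ k, (ε k * α k ^ 2 - 4 * τ * β k) := by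
  simp only [pd_diagQuadratic]
  rw [diagQuadratic, Finset.mul_sum, ← Finset.sum_add_distrib]
  refine Finset.sum_congr rfl fun k _ => ?_
  linear_combination (4 * τ ^ 2 * x k ^ 2 * ε k + 4 * τ * x k * α k) * hε k

end DiagonalQuadratic

section SolitonSystem

variable {n : ℕ}

/-- The part of the soliton system that has two free indices: for `ḡ = g / φ²` the tensor
`φ² (Ric ḡ + Hess f)` has components
`φ * solitonHessian φ f i j + gᵢⱼ * solitonMetricCoeff ε φ f`. -/
noncomputable def solitonHessian (φ f : (Fin n → ℝ) → ℝ) (i j : Fin n) (x : Fin n → ℝ) : ℝ :=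
  ((n : ℝ) - 2) * pd i (pd j φ) x + φ x * pd i (pd j f) x
    + pd i φ x * pd j f x + pd j φ x * pd i f x

/-- The part of the soliton system that multiplies the metric `gᵢⱼ = δᵢⱼ εᵢ`, see
`solitonHessian`. -/
noncomputable def solitonMetricCoeff (ε : Fin n → ℝ) (φ f : (Fin n → ℝ) → ℝ) (x : Fin n → ℝ) : ℝ :=
  ∑ k, ε k * (φ x * pd k (pd k φ) x - ((n : ℝ) - 1) * pd k φ x ^ 2
    - φ x * pd k φ x * pd k f x)

theorem solitonSystem_iff {ε : Fin n → ℝ} {Ω : Set (Fin n → ℝ)} {φ f : (Fin n → ℝ) → ℝ}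
    {lam : ℝ} :
    SolitonSystem n ε Ω φ f lam ↔
      (∀ i j, i ≠ j → ∀ x ∈ Ω, solitonHessian φ f i j x = 0) ∧
      ∀ i, ∀ x ∈ Ω,
        φ x * solitonHessian φ f i i x + ε i * solitonMetricCoeff ε φ f x = ε i * lam := by
  simp only [SolitonSystem, solitonHessian, solitonMetricCoeff, two_mul, add_mul, add_assoc]

variable {Φ F : ℝ → ℝ} {q : (Fin n → ℝ) → ℝ} {x : Fin n → ℝ}

theorem solitonHessian_comp (hΦ : ContDiffAt ℝ 2 Φ (q x)) (hF : ContDiffAt ℝ 2 F (q x))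
    (hq : ContDiffAt ℝ 2 q x) (i j : Fin n) :
    solitonHessian (Φ ∘ q) (F ∘ q) i j x =
      (((n : ℝ) - 2) * deriv (deriv Φ) (q x) + Φ (q x) * deriv (deriv F) (q x)
        + 2 * deriv Φ (q x) * deriv F (q x)) * (pd i q x * pd j q x)
      + (((n : ℝ) - 2) * deriv Φ (q x) + Φ (q x) * deriv F (q x)) * pd i (pd j q) x := by
  have hq' : DifferentiableAt ℝ q x := hq.differentiableAt two_ne_zero
  simp only [solitonHessian, pd_pd_comp hΦ hq, pd_pd_comp hF hq, Function.comp_apply,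
    pd_comp (hΦ.differentiableAt two_ne_zero) hq', pd_comp (hF.differentiableAt two_ne_zero) hq']
  ring

theorem solitonMetricCoeff_comp (hΦ : ContDiffAt ℝ 2 Φ (q x)) (hF : DifferentiableAt ℝ F (q x))
    (hq : ContDiffAt ℝ 2 q x) (ε : Fin n → ℝ) :
    solitonMetricCoeff ε (Φ ∘ q) (F ∘ q) x =
      (Φ (q x) * deriv (deriv Φ) (q x) - ((n : ℝ) - 1) * deriv Φ (q x) ^ 2
        - Φ (q x) * deriv Φ (q x) * deriv F (q x)) * ∑ k, ε k * pd k q x ^ 2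
      + Φ (q x) * deriv Φ (q x) * ∑ k, ε k * pd k (pd k q) x := by
  have hq' : DifferentiableAt ℝ q x := hq.differentiableAt two_ne_zero
  simp only [solitonMetricCoeff, pd_pd_comp hΦ hq, Function.comp_apply,
    pd_comp (hΦ.differentiableAt two_ne_zero) hq', pd_comp hF hq']
  rw [Finset.mul_sum, Finset.mul_sum, ← Finset.sum_add_distrib]
  exact Finset.sum_congr rfl fun k _ => by ring

theorem solitonSystem_comp {ε : Fin n → ℝ} (hε : ∀ k, ε k ^ 2 = 1) {Ω : Set (Fin n → ℝ)}
    {τ Λ lam : ℝ} (hΦ : ∀ s ∈ q '' Ω, ContDiffAt ℝ 2 Φ s) (hF : ∀ s ∈ q '' Ω, ContDiffAt ℝ 2 F s)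
    (hq : ∀ x ∈ Ω, ContDiffAt ℝ 2 q x)
    (hess_q : ∀ x ∈ Ω, ∀ i j, pd i (pd j q) x = if i = j then 2 * τ * ε j else 0)
    (grad_q : ∀ x ∈ Ω, ∑ k, ε k * pd k q x ^ 2 = 4 * τ * q x + Λ)
    (hODE : ∀ s ∈ q '' Ω, ReducedODE n τ Λ lam Φ F s) :
    SolitonSystem n ε Ω (Φ ∘ q) (F ∘ q) lam := by
  refine solitonSystem_iff.2 ⟨fun i j hij x hx => ?_, fun i x hx => ?_⟩
  · have hs : q x ∈ q '' Ω := Set.mem_image_of_mem q hx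
    rw [solitonHessian_comp (hΦ _ hs) (hF _ hs) (hq x hx), (hODE _ hs).1, hess_q x hx, if_neg hij]
    ring
  · have hs : q x ∈ q '' Ω := Set.mem_image_of_mem q hx
    obtain ⟨ode₁, ode₂⟩ := hODE (q x) hs
    have hessian_eq : solitonHessian (Φ ∘ q) (F ∘ q) i i x =
        (((n : ℝ) - 2) * deriv Φ (q x) + Φ (q x) * deriv F (q x)) * (2 * τ * ε i) := by
      rw [solitonHessian_comp (hΦ _ hs) (hF _ hs) (hq x hx), ode₁, hess_q x hx, if_pos rfl]
      ring
    have laplacian_q : ∑ k, ε k * pd k (pd k q) x = n * (2 * τ) := by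
      have summand (k : Fin n) : ε k * pd k (pd k q) x = 2 * τ := by
        rw [hess_q x hx, if_pos rfl]
        linear_combination 2 * τ * hε k
      simp [summand]
    rw [hessian_eq, solitonMetricCoeff_comp (hΦ _ hs) ((hF _ hs).differentiableAt two_ne_zero)
      (hq x hx), grad_q x hx, laplacian_q, Function.comp_apply]
    linear_combination ε i * ode₂

end SolitonSystem

theorem stmt_0_general (n : ℕ) (ε : Fin n → ℝ) (hε : ∀ k, ε k = 1 ∨ ε k = -1)
    (Ω : Set (Fin n → ℝ)) (τ lam : ℝ) (α β : Fin n → ℝ) (Φ F : ℝ → ℝ)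
    (q : (Fin n → ℝ) → ℝ)
    (hq : ∀ x, q x = ∑ k, (τ * ε k * (x k) ^ 2 + α k * x k + β k))
    (hΦ : ∀ s ∈ q '' Ω, ContDiffAt ℝ 2 Φ s) (hF : ∀ s ∈ q '' Ω, ContDiffAt ℝ 2 F s)
    (Λ : ℝ) (hΛ : Λ = ∑ k, (ε k * (α k) ^ 2 - 4 * τ * β k))
    (hODE : ∀ s ∈ q '' Ω, ReducedODE n τ Λ lam Φ F s) :
    SolitonSystem n ε Ω (Φ ∘ q) (F ∘ q) lam := by
  have hε_sq (k : Fin n) : ε k ^ 2 = 1 := sq_eq_one_iff.2 (hε k)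
  obtain rfl : q = diagQuadratic (fun k => τ * ε k) α β := funext hq
  refine solitonSystem_comp hε_sq hΦ hF (fun _ _ => (contDiff_diagQuadratic _ _ _).contDiffAt)
    (fun x _ i j => ?_) (fun x _ => ?_) hODE
  · rw [pd_pd_diagQuadratic, mul_assoc]
  · rw [hΛ, sum_sign_mul_pd_diagQuadratic_sq hε_sq]

/-- **Theorem 1.2, "if" direction.** If `Φ`, `F` satisfy the reduced ODE system at every
value of `q` on `Ω`, then `φ = Φ ∘ q`, `f = F ∘ q` satisfy the conformal soliton system. -/
theorem stmt_0 (n : ℕ) (hn : 2 ≤ n) (ε : Fin n → ℝ)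
    (hε : ∀ k, ε k = 1 ∨ ε k = -1)
    (Ω : Set (Fin n → ℝ)) (hΩ : IsOpen Ω)
    (τ lam : ℝ) (α β : Fin n → ℝ)
    (Φ F : ℝ → ℝ) (hΦ : ContDiff ℝ (⊤ : ℕ∞) Φ) (hF : ContDiff ℝ (⊤ : ℕ∞) F)
    (q : (Fin n → ℝ) → ℝ)
    (hq : ∀ x, q x = ∑ k, (τ * ε k * (x k) ^ 2 + α k * x k + β k))
    (Λ : ℝ) (hΛ : Λ = ∑ k, (ε k * (α k) ^ 2 - 4 * τ * β k))
    (hODE : ∀ s ∈ q '' Ω, ReducedODE n τ Λ lam Φ F s) :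
    SolitonSystem n ε Ω (Φ ∘ q) (F ∘ q) lam :=
  stmt_0_general n ε hε Ω τ lam α β Φ F q hq
    (fun _ _ => (contDiff_infty.1 hΦ 2).contDiffAt)
    (fun _ _ => (contDiff_infty.1 hF 2).contDiffAt) Λ hΛ hODE
end

section
/- Let n ≥ 2, let Ω ⊆ ℝⁿ be open, and let φ, f : Ω → ℝ be smooth with φ(x) ≠ 0 for all x ∈ Ω, satisfying for every index i the diagonal equations: φ·[(n−2)∂ᵢ∂ᵢφ + φ·∂ᵢ∂ᵢf + 2·∂ᵢφ·∂ᵢf] + ε i·Σₖ ε k·[φ·∂ₖ∂ₖφ − (n−1)(∂ₖφ)² − φ·∂ₖφ·∂ₖf] = ε i·λ on Ω. Then for every index i, the following identity holds on Ω: n·ε i·[(n−2)∂ᵢ∂ᵢφ + φ·∂ᵢ∂ᵢf + 2·∂ᵢφ·∂ᵢf] = Σₖ ε k·[(n−2)∂ₖ∂ₖφ + φ·∂ₖ∂ₖf + 2·∂ₖφ·∂ₖf]. (Equation (16) in the proof of Theorem 1.1.) -/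
/-!
Multiplying the `k`-th diagonal equation by `ε k` and using `ε k ^ 2 = 1` turns it into
`φ * (ε k * A k) = lam - S`, where `A k` is the bracket multiplied by `φ` and `S` is the sum over
all indices. The right-hand side does not depend on `k`, so after cancelling `φ` neither does
`ε k * A k`; hence the sum of these quantities is `n` times any one of them.
-/

section DiagonalSystem

variable {ι R : Type*} [CommRing R] {ε A : ι → R} {c S r : R}

theorem mul_sign_mul_eq_sub {e a : R} (he : e * e = 1) (h : c * a + e * S = e * r) :
    c * (e * a) = r - S := by
  linear_combination e * h + (r - S) * he

theorem sign_mul_eq_sign_mul (hε : ∀ k, ε k * ε k = 1) (hc : IsLeftRegular c)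
    (h : ∀ k, c * A k + ε k * S = ε k * r) (i j : ι) : ε i * A i = ε j * A j :=
  hc ((mul_sign_mul_eq_sub (hε i) (h i)).trans (mul_sign_mul_eq_sub (hε j) (h j)).symm)

theorem stmt_4_general [Fintype ι] (hε : ∀ k, ε k * ε k = 1) (hc : IsLeftRegular c)
    (h : ∀ k, c * A k + ε k * S = ε k * r) (i : ι) :
    (Fintype.card ι : R) * ε i * A i = ∑ k, ε k * A k :=
  calc (Fintype.card ι : R) * ε i * A i = ∑ _k : ι, ε i * A i := by
        rw [Finset.sum_const, Finset.card_univ, nsmul_eq_mul, mul_assoc]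
    _ = ∑ k, ε k * A k :=
        Fintype.sum_congr _ _ fun k => sign_mul_eq_sign_mul hε hc h i k

end DiagonalSystem

/-- **Equation (16)** in the proof of Theorem 1.1: consequence of the diagonal
soliton equations. -/
theorem stmt_4 (n : ℕ) (hn : 2 ≤ n) (ε : Fin n → ℝ)
    (hε : ∀ k, ε k = 1 ∨ ε k = -1)
    (Ω : Set (Fin n → ℝ)) (hΩ : IsOpen Ω)
    (φ f : (Fin n → ℝ) → ℝ) (hφ : ContDiffOn ℝ (⊤ : ℕ∞) φ Ω) (hf : ContDiffOn ℝ (⊤ : ℕ∞) f Ω)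
    (hφ0 : ∀ x ∈ Ω, φ x ≠ 0)
    (lam : ℝ)
    (hdiag : ∀ i : Fin n, ∀ x ∈ Ω,
      φ x * (((n : ℝ) - 2) * pd i (pd i φ) x + φ x * pd i (pd i f) x
          + 2 * pd i φ x * pd i f x)
        + ε i * ∑ k, ε k * (φ x * pd k (pd k φ) x - ((n : ℝ) - 1) * (pd k φ x) ^ 2
          - φ x * pd k φ x * pd k f x) = ε i * lam) :
    ∀ i : Fin n, ∀ x ∈ Ω,
      (n : ℝ) * ε i * (((n : ℝ) - 2) * pd i (pd i φ) x + φ x * pd i (pd i f) x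
          + 2 * pd i φ x * pd i f x)
        = ∑ k, ε k * (((n : ℝ) - 2) * pd k (pd k φ) x + φ x * pd k (pd k f) x
          + 2 * pd k φ x * pd k f x) := by
  intro i x hx
  simpa only [Fintype.card_fin] using stmt_4_general (fun k => mul_self_eq_one_iff.mpr (hε k))
    (IsRegular.of_ne_zero (hφ0 x hx)).left (fun k => hdiag k x hx) i
end

section
/- Let n ≥ 3 and let I ⊆ ℝ be an open interval. Let Φ, F : I → ℝ be smooth with Φ(s) ≠ 0 for all s ∈ I. If (n−2)Φ'(s) + Φ(s)F'(s) = 0 for all s ∈ I and also (n−2)Φ''(s) + Φ(s)F''(s) + 2Φ'(s)F'(s) = 0 for all s ∈ I, then Φ' ≡ 0 and F' ≡ 0 on I, i.e. both Φ and F are constant. (The triviality claim around equation (18) in the proof of Theorem 1.1: an ansatz solution with (n−2)φ' + φf' = 0 is trivial.) -/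
/-!
Differentiating `c Φ' + Φ F' = 0` and subtracting the result from the second-order equation leaves
`Φ' F' = 0`. Multiplying the first-order equation by `Φ'` then gives `c Φ' ^ 2 = 0`, so `Φ` is
constant; if this constant is nonzero, the first-order equation reduces to `F' = 0`.
-/

open Filter Topology

section Pointwise

variable {𝕜 : Type*} [NontriviallyNormedField 𝕜] {c s : 𝕜} {Φ F : 𝕜 → 𝕜}

theorem mul_deriv_deriv_add_eq_zero_of_first_order (hΦ : DifferentiableAt 𝕜 Φ s)
    (hF' : DifferentiableAt 𝕜 (deriv F) s)
    (h : ∀ᶠ t in 𝓝 s, c * deriv Φ t + Φ t * deriv F t = 0) :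
    c * deriv (deriv Φ) s + Φ s * deriv (deriv F) s + deriv Φ s * deriv F s = 0 := by
  have hEq : (fun t ↦ c * deriv Φ t) =ᶠ[𝓝 s] fun t ↦ -(Φ t * deriv F t) :=
    h.mono fun _ ↦ eq_neg_of_add_eq_zero_left
  have hDeriv : c * deriv (deriv Φ) s = -(deriv Φ s * deriv F s + Φ s * deriv (deriv F) s) :=
    calc
      c * deriv (deriv Φ) s = deriv (fun t ↦ c * deriv Φ t) s := (deriv_const_mul_field c).symm
      _ = deriv (fun t ↦ -(Φ t * deriv F t)) s := hEq.deriv_eq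
      _ = -(deriv Φ s * deriv F s + Φ s * deriv (deriv F) s) :=
        (hΦ.hasDerivAt.mul hF'.hasDerivAt).neg.deriv
  linear_combination hDeriv

theorem deriv_mul_deriv_eq_zero_of_first_second_order (hΦ : DifferentiableAt 𝕜 Φ s)
    (hF' : DifferentiableAt 𝕜 (deriv F) s)
    (h₁ : ∀ᶠ t in 𝓝 s, c * deriv Φ t + Φ t * deriv F t = 0)
    (h₂ : c * deriv (deriv Φ) s + Φ s * deriv (deriv F) s + 2 * deriv Φ s * deriv F s = 0) :
    deriv Φ s * deriv F s = 0 := by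
  linear_combination h₂ - mul_deriv_deriv_add_eq_zero_of_first_order hΦ hF' h₁

theorem deriv_eq_zero_of_first_second_order (hc : c ≠ 0) (hΦ : DifferentiableAt 𝕜 Φ s)
    (hF' : DifferentiableAt 𝕜 (deriv F) s)
    (h₁ : ∀ᶠ t in 𝓝 s, c * deriv Φ t + Φ t * deriv F t = 0)
    (h₂ : c * deriv (deriv Φ) s + Φ s * deriv (deriv F) s + 2 * deriv Φ s * deriv F s = 0) :
    deriv Φ s = 0 := by
  have hMul : deriv Φ s * deriv F s = 0 :=
    deriv_mul_deriv_eq_zero_of_first_second_order hΦ hF' h₁ h₂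
  have hSq : c * deriv Φ s ^ 2 = 0 := by
    linear_combination deriv Φ s * h₁.self_of_nhds - Φ s * hMul
  exact pow_eq_zero_iff two_ne_zero |>.mp <| (mul_eq_zero_iff_left hc).mp hSq

end Pointwise

theorem stmt_5_general {𝕜 : Type*} [RCLike 𝕜] {c : 𝕜} (hc : c ≠ 0) {U : Set 𝕜} (hUo : IsOpen U)
    (hUc : IsPreconnected U) {Φ F : 𝕜 → 𝕜} (hΦ : DifferentiableOn 𝕜 Φ U)
    (hF : DifferentiableOn 𝕜 F U) (hF' : DifferentiableOn 𝕜 (deriv F) U)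
    (hΦ0 : ∃ s ∈ U, Φ s ≠ 0)
    (h₁ : ∀ s ∈ U, c * deriv Φ s + Φ s * deriv F s = 0)
    (h₂ : ∀ s ∈ U, c * deriv (deriv Φ) s + Φ s * deriv (deriv F) s
      + 2 * deriv Φ s * deriv F s = 0) :
    (∀ s ∈ U, deriv Φ s = 0 ∧ deriv F s = 0) ∧
      (∀ s ∈ U, ∀ t ∈ U, Φ s = Φ t ∧ F s = F t) := by
  have hΦ'_zero : U.EqOn (deriv Φ) 0 := fun s hs ↦
    have hU : U ∈ 𝓝 s := hUo.mem_nhds hs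
    deriv_eq_zero_of_first_second_order hc (hΦ.differentiableAt hU) (hF'.differentiableAt hU)
      (eventually_of_mem hU h₁) (h₂ s hs)
  have hΦ_const : ∀ s ∈ U, ∀ t ∈ U, Φ s = Φ t := fun s hs t ht ↦
    hUo.is_const_of_deriv_eq_zero hUc hΦ hΦ'_zero hs ht
  have hF'_zero : U.EqOn (deriv F) 0 := fun s hs ↦ by
    obtain ⟨s₀, hs₀, hΦs₀⟩ := hΦ0
    have hΦs : Φ s ≠ 0 := hΦ_const s₀ hs₀ s hs ▸ hΦs₀
    simpa [hΦ'_zero hs, hΦs] using h₁ s hs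
  exact ⟨fun s hs ↦ ⟨hΦ'_zero hs, hF'_zero hs⟩, fun s hs t ht ↦
    ⟨hΦ_const s hs t ht, hUo.is_const_of_deriv_eq_zero hUc hF hF'_zero hs ht⟩⟩

/-- **Triviality claim (eq. (18)) in the proof of Theorem 1.1.** If a solution of the first
reduced ODE also satisfies `(n−2)Φ' + Φ F' = 0`, then both `Φ` and `F` are trivial
(constant). -/
theorem stmt_5 (n : ℕ) (hn : 3 ≤ n) (a b : ℝ) (hab : a < b)
    (Φ F : ℝ → ℝ)
    (hΦ : ContDiffOn ℝ (⊤ : ℕ∞) Φ (Set.Ioo a b)) (hF : ContDiffOn ℝ (⊤ : ℕ∞) F (Set.Ioo a b))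
    (hΦ0 : ∀ s ∈ Set.Ioo a b, Φ s ≠ 0)
    (h1 : ∀ s ∈ Set.Ioo a b, ((n : ℝ) - 2) * deriv Φ s + Φ s * deriv F s = 0)
    (h2 : ∀ s ∈ Set.Ioo a b, ((n : ℝ) - 2) * deriv (deriv Φ) s
        + Φ s * deriv (deriv F) s + 2 * deriv Φ s * deriv F s = 0) :
    (∀ s ∈ Set.Ioo a b, deriv Φ s = 0 ∧ deriv F s = 0) ∧
      (∀ s ∈ Set.Ioo a b, ∀ t ∈ Set.Ioo a b, Φ s = Φ t ∧ F s = F t) := by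
  have hn2 : (n : ℝ) - 2 ≠ 0 := sub_ne_zero.mpr <| by exact_mod_cast (by lia : n ≠ 2)
  have hF' : DifferentiableOn ℝ (deriv F) (Set.Ioo a b) :=
    (hF.deriv_of_isOpen (m := (⊤ : ℕ∞)) isOpen_Ioo (by simp)).differentiableOn (by simp)
  exact stmt_5_general hn2 isOpen_Ioo isPreconnected_Ioo (hΦ.differentiableOn (by simp))
    (hF.differentiableOn (by simp)) hF'
    ((Set.nonempty_Ioo.mpr hab).imp fun s hs ↦ ⟨hs, hΦ0 s hs⟩) h1 h2
end

section
/- Let n ≥ 2, let Ω ⊆ ℝⁿ be open, and let ξ : Ω → ℝ be smooth with ∂ᵢξ(x) ≠ 0 for every i and x ∈ Ω. Let Φ, F : ℝ → ℝ be smooth with (n−2)Φ'(s) + Φ(s)F'(s) ≠ 0 for all s in ξ(Ω). Suppose φ = Φ ∘ ξ and f = F ∘ ξ satisfy the off-diagonal equations: for all i ≠ j, (n−2)∂ᵢ∂ⱼφ + φ·∂ᵢ∂ⱼf + ∂ᵢφ·∂ⱼf + ∂ⱼφ·∂ᵢf = 0 on Ω. Then, defining G : ξ(Ω) → ℝ by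 G = −[(n−2)Φ'' + ΦF'' + 2Φ'F'] / [(n−2)Φ' + ΦF'], one has ∂ᵢ∂ⱼξ(x) = G(ξ(x))·∂ᵢξ(x)·∂ⱼξ(x) for all i ≠ j and all x ∈ Ω. (Equation (12), the key relation ξ_{,ij}/(ξ_{,i}ξ_{,j}) = F(ξ).) -/
/-!
The second-order chain rule `∂ᵥ∂_w(H ∘ ξ) = H'(ξ) ∂ᵥ∂_wξ + H''(ξ) ∂ᵥξ ∂_wξ`, applied to `H = Φ` and
`H = F`, turns the off-diagonal equation into
`[cΦ' + ΦF'] ∂ᵥ∂_wξ + [cΦ'' + ΦF'' + 2Φ'F'] ∂ᵥξ ∂_wξ = 0` with `c = n - 2`. The first bracket does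
not vanish, so the equation can be solved for `∂ᵥ∂_wξ`.
-/

section

variable {𝕜 E : Type*} [NontriviallyNormedField 𝕜] [NormedAddCommGroup E] [NormedSpace 𝕜 E]
  {x : E}

section ChainRule

variable {G : Type*} [NormedAddCommGroup G] [NormedSpace 𝕜 G]

lemma differentiableAt_fderiv_apply_const {f : E → G} (hf : ContDiffAt 𝕜 2 f x) (v : E) :
    DifferentiableAt 𝕜 (fun y => fderiv 𝕜 f y v) x := by
  have hf' : ContDiffAt 𝕜 1 (fderiv 𝕜 f) x := hf.fderiv_right one_add_one_eq_two.le
  exact hf'.differentiableAt_one.clm_apply (differentiableAt_const v)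

lemma differentiableAt_deriv_of_contDiffAt_two {H : 𝕜 → G} {s : 𝕜} (hH : ContDiffAt 𝕜 2 H s) :
    DifferentiableAt 𝕜 (deriv H) s :=
  differentiableAt_fderiv_apply_const hH 1

lemma fderiv_comp_apply_eq_smul_deriv {H : 𝕜 → G} {f : E → 𝕜}
    (hH : DifferentiableAt 𝕜 H (f x)) (hf : DifferentiableAt 𝕜 f x) (v : E) :
    fderiv 𝕜 (H ∘ f) x v = fderiv 𝕜 f x v • deriv H (f x) := by
  rw [fderiv_comp x hH hf, ContinuousLinearMap.comp_apply, fderiv_eq_smul_deriv]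

lemma eventually_fderiv_comp_apply_eq_smul_deriv {H : 𝕜 → G} {f : E → 𝕜}
    (hH : ContDiffAt 𝕜 1 H (f x)) (hf : ContDiffAt 𝕜 1 f x) (v : E) :
    ∀ᶠ y in nhds x, fderiv 𝕜 (H ∘ f) y v = fderiv 𝕜 f y v • deriv H (f y) := by
  filter_upwards [hf.eventually (by simp), hf.continuousAt.eventually (hH.eventually (by simp))]
    with y hfy hHy
  exact fderiv_comp_apply_eq_smul_deriv hHy.differentiableAt_one hfy.differentiableAt_one v

lemma fderiv_fderiv_comp_apply {H : 𝕜 → G} {f : E → 𝕜}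
    (hH : ContDiffAt 𝕜 2 H (f x)) (hf : ContDiffAt 𝕜 2 f x) (v w : E) :
    fderiv 𝕜 (fun y => fderiv 𝕜 (H ∘ f) y w) x v =
      fderiv 𝕜 (fun y => fderiv 𝕜 f y w) x v • deriv H (f x) +
        (fderiv 𝕜 f x v * fderiv 𝕜 f x w) • deriv (deriv H) (f x) := by
  have hfirst : (fun y => fderiv 𝕜 (H ∘ f) y w) =ᶠ[nhds x]
      fun y => fderiv 𝕜 f y w • (deriv H ∘ f) y :=
    eventually_fderiv_comp_apply_eq_smul_deriv (hH.of_le one_le_two) (hf.of_le one_le_two) w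
  have hf₁ : DifferentiableAt 𝕜 f x := hf.differentiableAt two_ne_zero
  have hH' : DifferentiableAt 𝕜 (deriv H) (f x) := differentiableAt_deriv_of_contDiffAt_two hH
  calc fderiv 𝕜 (fun y => fderiv 𝕜 (H ∘ f) y w) x v
      = fderiv 𝕜 (fun y => fderiv 𝕜 f y w • (deriv H ∘ f) y) x v := by rw [hfirst.fderiv_eq]
    _ = fderiv 𝕜 f x w • fderiv 𝕜 (deriv H ∘ f) x v +
          fderiv 𝕜 (fun y => fderiv 𝕜 f y w) x v • deriv H (f x) := by
        rw [fderiv_fun_smul (differentiableAt_fderiv_apply_const hf w) (hH'.comp x hf₁)]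
        rfl
    _ = _ := by
        rw [fderiv_comp_apply_eq_smul_deriv hH' hf₁, smul_smul, mul_comm, add_comm]

end ChainRule

variable {ξ : E → 𝕜} {Φ F : 𝕜 → 𝕜}

lemma offDiagonal_comp_eq (hξ : ContDiffAt 𝕜 2 ξ x) (hΦ : ContDiffAt 𝕜 2 Φ (ξ x))
    (hF : ContDiffAt 𝕜 2 F (ξ x)) (c : 𝕜) (v w : E) :
    c * fderiv 𝕜 (fun y => fderiv 𝕜 (Φ ∘ ξ) y w) x v
        + (Φ ∘ ξ) x * fderiv 𝕜 (fun y => fderiv 𝕜 (F ∘ ξ) y w) x v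
        + fderiv 𝕜 (Φ ∘ ξ) x v * fderiv 𝕜 (F ∘ ξ) x w
        + fderiv 𝕜 (Φ ∘ ξ) x w * fderiv 𝕜 (F ∘ ξ) x v =
      (c * deriv Φ (ξ x) + Φ (ξ x) * deriv F (ξ x)) * fderiv 𝕜 (fun y => fderiv 𝕜 ξ y w) x v
        + (c * deriv (deriv Φ) (ξ x) + Φ (ξ x) * deriv (deriv F) (ξ x)
            + 2 * deriv Φ (ξ x) * deriv F (ξ x)) * (fderiv 𝕜 ξ x v * fderiv 𝕜 ξ x w) := by
  have hξ₁ := hξ.differentiableAt two_ne_zero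
  have hΦ₁ := hΦ.differentiableAt two_ne_zero
  have hF₁ := hF.differentiableAt two_ne_zero
  simp only [fderiv_fderiv_comp_apply hΦ hξ, fderiv_fderiv_comp_apply hF hξ,
    fderiv_comp_apply_eq_smul_deriv hΦ₁ hξ₁, fderiv_comp_apply_eq_smul_deriv hF₁ hξ₁,
    Function.comp_apply, smul_eq_mul]
  ring

theorem stmt_6_general (hξ : ContDiffAt 𝕜 2 ξ x) (hΦ : ContDiffAt 𝕜 2 Φ (ξ x))
    (hF : ContDiffAt 𝕜 2 F (ξ x)) {c : 𝕜} {v w : E}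
    (hnd : c * deriv Φ (ξ x) + Φ (ξ x) * deriv F (ξ x) ≠ 0)
    (hoff : c * fderiv 𝕜 (fun y => fderiv 𝕜 (Φ ∘ ξ) y w) x v
        + (Φ ∘ ξ) x * fderiv 𝕜 (fun y => fderiv 𝕜 (F ∘ ξ) y w) x v
        + fderiv 𝕜 (Φ ∘ ξ) x v * fderiv 𝕜 (F ∘ ξ) x w
        + fderiv 𝕜 (Φ ∘ ξ) x w * fderiv 𝕜 (F ∘ ξ) x v = 0) :
    fderiv 𝕜 (fun y => fderiv 𝕜 ξ y w) x v =
      (-(c * deriv (deriv Φ) (ξ x) + Φ (ξ x) * deriv (deriv F) (ξ x)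
          + 2 * deriv Φ (ξ x) * deriv F (ξ x)) /
        (c * deriv Φ (ξ x) + Φ (ξ x) * deriv F (ξ x)))
      * fderiv 𝕜 ξ x v * fderiv 𝕜 ξ x w := by
  rw [offDiagonal_comp_eq hξ hΦ hF] at hoff
  rw [mul_assoc, div_mul_eq_mul_div, eq_div_iff hnd]
  linear_combination hoff

end

/-- **Equation (12)** in the proof of Theorem 1.1: the off-diagonal soliton equations
force `ξ_{,ij} = G(ξ)·ξ_{,i}·ξ_{,j}` with
`G = −[(n−2)Φ'' + ΦF'' + 2Φ'F'] / [(n−2)Φ' + ΦF']`. -/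
theorem stmt_6 (n : ℕ) (hn : 2 ≤ n) (ε : Fin n → ℝ)
    (hε : ∀ k, ε k = 1 ∨ ε k = -1)
    (Ω : Set (Fin n → ℝ)) (hΩ : IsOpen Ω)
    (ξ : (Fin n → ℝ) → ℝ) (hξ : ContDiffOn ℝ (⊤ : ℕ∞) ξ Ω)
    (hξ' : ∀ i : Fin n, ∀ x ∈ Ω, pd i ξ x ≠ 0)
    (Φ F : ℝ → ℝ) (hΦ : ContDiff ℝ (⊤ : ℕ∞) Φ) (hF : ContDiff ℝ (⊤ : ℕ∞) F)
    (hnd : ∀ s ∈ ξ '' Ω, ((n : ℝ) - 2) * deriv Φ s + Φ s * deriv F s ≠ 0)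
    (hoff : ∀ i j : Fin n, i ≠ j → ∀ x ∈ Ω,
      ((n : ℝ) - 2) * pd i (pd j (Φ ∘ ξ)) x + (Φ ∘ ξ) x * pd i (pd j (F ∘ ξ)) x
        + pd i (Φ ∘ ξ) x * pd j (F ∘ ξ) x + pd j (Φ ∘ ξ) x * pd i (F ∘ ξ) x = 0) :
    ∀ i j : Fin n, i ≠ j → ∀ x ∈ Ω,
      pd i (pd j ξ) x =
        (-(((n : ℝ) - 2) * deriv (deriv Φ) (ξ x) + Φ (ξ x) * deriv (deriv F) (ξ x)
            + 2 * deriv Φ (ξ x) * deriv F (ξ x)) /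
          (((n : ℝ) - 2) * deriv Φ (ξ x) + Φ (ξ x) * deriv F (ξ x)))
        * pd i ξ x * pd j ξ x := by
  intro i j hij x hx
  exact stmt_6_general
    ((contDiffOn_infty.1 hξ 2).contDiffAt (hΩ.mem_nhds hx)) (contDiff_infty.1 hΦ 2).contDiffAt
    (contDiff_infty.1 hF 2).contDiffAt (hnd (ξ x) ⟨x, hx, rfl⟩) (hoff i j hij x hx)
end

section
/- Let n ≥ 2, let Ω ⊆ ℝⁿ be a convex open set, let ξ : Ω → ℝ be smooth, and let H : ℝ → ℝ be a differentiable function. Suppose that for all i ≠ j and all x ∈ Ω, ∂ᵢ∂ⱼξ(x) = H'(ξ(x))·∂ᵢξ(x)·∂ⱼξ(x). Then for each index i, the function x ↦ ∂ᵢξ(x)·exp(−H(ξ(x))) depends only on the i-th coordinate: for all x, y ∈ Ω with xᵢ = yᵢ, one has ∂ᵢξ(x)·exp(−H(ξ(x))) = ∂ᵢξ(y)·exp(−H(ξ(y))). (The separation step (19)–(20) in the proof of Theorem 1.1: ξ_{,i} = Gᵢ(xᵢ)·e^{∫F dξ}.) -/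
/-!
Put `g = ∂ᵢξ · exp (-H(ξ))`. For `j ≠ i` the product and chain rules give
`∂ⱼg = exp (-H(ξ)) · (∂ⱼ∂ᵢξ - H'(ξ) · ∂ⱼξ · ∂ᵢξ) = 0`, so the derivative of `g` vanishes in every
direction tangent to the hyperplanes `xᵢ = c`. By the mean value theorem `g` is locally constant on
the slices of `Ω` by these hyperplanes, and the slices are connected because `Ω` is convex.
-/

lemma isPreconnected_inter_fiber_of_convex {E M : Type*} [AddCommGroup E] [Module ℝ E]
    [TopologicalSpace E] [ContinuousAdd E] [ContinuousSMul ℝ E] [AddCommGroup M] [Module ℝ M]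
    {s : Set E} (hs : Convex ℝ s) (l : E →ₗ[ℝ] M) (c : M) : IsPreconnected (s ∩ l ⁻¹' {c}) :=
  (hs.inter ((convex_singleton c).linear_preimage l)).isPreconnected

section NormedSpace

variable {E : Type*} [NormedAddCommGroup E] [NormedSpace ℝ E]

lemma eq_of_fderiv_apply_sub_eq_zero {f : E → ℝ} {s : Set E} (hs : Convex ℝ s)
    (hf : ∀ z ∈ s, DifferentiableAt ℝ f z) {x y : E} (hx : x ∈ s) (hy : y ∈ s)
    (hzero : ∀ z ∈ s, fderiv ℝ f z (y - x) = 0) : f x = f y := by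
  obtain ⟨z, hz, hmvt⟩ :=
    domain_mvt (fun z hz => (hf z hz).hasFDerivAt.hasFDerivWithinAt) hs hx hy
  have hzs : z ∈ s := hs.segment_subset hx hy hz
  rw [hzero z hzs] at hmvt
  exact (sub_eq_zero.mp hmvt).symm

lemma eq_on_fiber_of_fderiv_eq_zero_on_ker {M : Type*} [AddCommGroup M] [Module ℝ M]
    (l : E →ₗ[ℝ] M) {f : E → ℝ} {Ω : Set E} (hΩ : IsOpen Ω) (hf : DifferentiableOn ℝ f Ω)
    (hker : ∀ z ∈ Ω, ∀ v ∈ l.ker, fderiv ℝ f z v = 0) {c : M}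
    (hconn : IsPreconnected (Ω ∩ l ⁻¹' {c})) {x y : E}
    (hx : x ∈ Ω ∩ l ⁻¹' {c}) (hy : y ∈ Ω ∩ l ⁻¹' {c}) : f x = f y := by
  refine hconn.induction₂ (fun a b => f a = f b) (fun a ha => ?_)
    (fun _ _ _ _ _ _ => Eq.trans) (fun _ _ _ _ => Eq.symm) hx hy
  obtain ⟨r, hr, hball⟩ := Metric.isOpen_iff.mp hΩ a ha.1
  filter_upwards [inter_mem_nhdsWithin _ (Metric.ball_mem_nhds a hr)] with b ⟨hb, hbr⟩
  have hba : b - a ∈ l.ker := by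
    rw [LinearMap.sub_mem_ker_iff]
    exact hb.2.trans ha.2.symm
  exact eq_of_fderiv_apply_sub_eq_zero (convex_ball a r)
    (fun z hz => hf.differentiableAt (hΩ.mem_nhds (hball hz)))
    (Metric.mem_ball_self hr) hbr (fun z hz => hker z (hball hz) _ hba)

lemma hasFDerivAt_mul_exp_neg_comp {φ ξ : E → ℝ} {φ' ξ' : E →L[ℝ] ℝ} {H : ℝ → ℝ} {H' : ℝ} {z : E}
    (hφ : HasFDerivAt φ φ' z) (hξ : HasFDerivAt ξ ξ' z) (hH : HasDerivAt H H' (ξ z)) :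
    HasFDerivAt (fun w => φ w * Real.exp (-(H (ξ w))))
      (Real.exp (-(H (ξ z))) • (φ' - (H' * φ z) • ξ')) z := by
  refine (hφ.mul (hH.comp_hasFDerivAt z hξ).neg.exp).congr_fderiv ?_
  simp only [Pi.neg_apply, Function.comp_apply]
  module

end NormedSpace

lemma map_eq_zero_of_map_single_eq_zero {ι R M : Type*} [Finite ι] [DecidableEq ι] [Semiring R]
    [AddCommMonoid M] [Module R M] (L : (ι → R) →ₗ[R] M) {i : ι}
    (hL : ∀ j, j ≠ i → L (Pi.single j 1) = 0) {v : ι → R} (hv : v i = 0) : L v = 0 := by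
  cases nonempty_fintype ι
  rw [← Finset.univ_sum_single v, map_sum]
  refine Finset.sum_eq_zero fun j _ => ?_
  obtain rfl | hj := eq_or_ne j i
  · rw [hv, Pi.single_zero, map_zero]
  · rw [← mul_one (v j), ← smul_eq_mul, Pi.single_smul, map_smul, hL j hj, smul_zero]

lemma differentiableOn_pd {n : ℕ} {u : (Fin n → ℝ) → ℝ} {Ω : Set (Fin n → ℝ)} (hΩ : IsOpen Ω)
    (hu : ContDiffOn ℝ 2 u Ω) (i : Fin n) : DifferentiableOn ℝ (pd i u) Ω :=
  ((hu.fderiv_of_isOpen hΩ (m := 1) (by norm_num)).differentiableOn one_ne_zero).clm_apply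
    (differentiableOn_const _)

theorem stmt_7_general {n : ℕ} {Ω : Set (Fin n → ℝ)} (hΩ : IsOpen Ω) {i : Fin n}
    (hconn : ∀ c : ℝ, IsPreconnected (Ω ∩ {z | z i = c}))
    {ξ : (Fin n → ℝ) → ℝ} (hξ : DifferentiableOn ℝ ξ Ω) (hpd : DifferentiableOn ℝ (pd i ξ) Ω)
    {H : ℝ → ℝ} (hH : ∀ z ∈ Ω, DifferentiableAt ℝ H (ξ z))
    (hrel : ∀ j, j ≠ i → ∀ z ∈ Ω, pd j (pd i ξ) z = deriv H (ξ z) * pd j ξ z * pd i ξ z)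
    {x y : Fin n → ℝ} (hx : x ∈ Ω) (hy : y ∈ Ω) (hxy : x i = y i) :
    pd i ξ x * Real.exp (-(H (ξ x))) = pd i ξ y * Real.exp (-(H (ξ y))) := by
  have hderiv : ∀ z ∈ Ω, HasFDerivAt (fun w => pd i ξ w * Real.exp (-(H (ξ w))))
      (Real.exp (-(H (ξ z))) • (fderiv ℝ (pd i ξ) z - (deriv H (ξ z) * pd i ξ z) • fderiv ℝ ξ z))
      z := fun z hz =>
    hasFDerivAt_mul_exp_neg_comp (hpd.hasFDerivAt (hΩ.mem_nhds hz))
      (hξ.hasFDerivAt (hΩ.mem_nhds hz)) (hH z hz).hasDerivAt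
  refine eq_on_fiber_of_fderiv_eq_zero_on_ker (LinearMap.proj (φ := fun _ : Fin n => ℝ) i) hΩ
    (fun z hz => (hderiv z hz).differentiableAt.differentiableWithinAt)
    (fun z hz v hv => ?_) (hconn (y i)) ⟨hx, hxy⟩ ⟨hy, rfl⟩
  rw [(hderiv z hz).fderiv]
  refine map_eq_zero_of_map_single_eq_zero (ContinuousLinearMap.toLinearMap _) (fun j hj => ?_) hv
  change Real.exp (-(H (ξ z))) * (pd j (pd i ξ) z - deriv H (ξ z) * pd i ξ z * pd j ξ z) = 0
  rw [hrel j hj z hz, mul_right_comm, sub_self, mul_zero]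

/-- **Separation step (19)–(20)** in the proof of Theorem 1.1: if
`ξ_{,ij} = H'(ξ)·ξ_{,i}·ξ_{,j}` for `i ≠ j`, then `ξ_{,i}·e^{−H(ξ)}` depends only on the
`i`-th coordinate. -/
theorem stmt_7 (n : ℕ) (hn : 2 ≤ n)
    (Ω : Set (Fin n → ℝ)) (hΩ : IsOpen Ω) (hconv : Convex ℝ Ω)
    (ξ : (Fin n → ℝ) → ℝ) (hξ : ContDiffOn ℝ (⊤ : ℕ∞) ξ Ω)
    (H : ℝ → ℝ) (hH : Differentiable ℝ H)
    (hrel : ∀ i j : Fin n, i ≠ j → ∀ x ∈ Ω,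
      pd i (pd j ξ) x = deriv H (ξ x) * pd i ξ x * pd j ξ x) :
    ∀ i : Fin n, ∀ x ∈ Ω, ∀ y ∈ Ω, x i = y i →
      pd i ξ x * Real.exp (-(H (ξ x))) = pd i ξ y * Real.exp (-(H (ξ y))) :=
  fun i _ hx _ hy => stmt_7_general hΩ
    (isPreconnected_inter_fiber_of_convex hconv (LinearMap.proj i))
    (hξ.differentiableOn (by simp))
    (differentiableOn_pd hΩ (hξ.of_le (WithTop.coe_le_coe.mpr le_top)) i)
    (fun z _ => hH (ξ z)) (fun j hj => hrel j i hj) hx hy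
end

section
/- Let n ≥ 3, let I ⊆ ℝ be a nonempty open interval, let τ, λ, Λ ∈ ℝ, and let Φ : I → ℝ be smooth and F : I → ℝ be constant. If Φ and F satisfy the reduced ODE system at every s ∈ I, then there exist constants b₁, b₂ ∈ ℝ with Φ(s) = b₁·s + b₂ for all s ∈ I, and moreover λ = (n−1)·b₁·(4τ·b₂ − b₁·Λ). (The claim that solitons with constant potential function have linear conformal factor, hence constant curvature.) -/
open Filter Topology

theorem exists_eqOn_smul_add_of_deriv_deriv_eq_zero {𝕜 E : Type*} [RCLike 𝕜]
    [NormedAddCommGroup E] [NormedSpace 𝕜 E] {f : 𝕜 → E} {U : Set 𝕜} (hU : IsOpen U)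
    (hU' : IsPreconnected U) (hf : DifferentiableOn 𝕜 f U)
    (hf' : DifferentiableOn 𝕜 (deriv f) U) (hf'' : U.EqOn (deriv (deriv f)) 0) :
    ∃ v w : E, U.EqOn f fun s => s • v + w := by
  obtain ⟨v, hv⟩ := hU.exists_is_const_of_deriv_eq_zero hU' hf' hf''
  have hderiv : U.EqOn (deriv f) (deriv fun s => s • v) := fun s hs => by
    rw [hv s hs, ((hasDerivAt_id' s).smul_const v).deriv, one_smul]
  obtain ⟨w, hw⟩ := hU.exists_eq_add_of_deriv_eq hU' hf (by fun_prop) hderiv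
  exact ⟨v, w, hw⟩

namespace ReducedODE

variable {n : ℕ} {τ Λ lam : ℝ} {Φ F : ℝ → ℝ} {s c : ℝ}

theorem iff_of_eventuallyEq_const (hF : F =ᶠ[𝓝 s] fun _ => c) :
    ReducedODE n τ Λ lam Φ F s ↔
      ((n : ℝ) - 2) * deriv (deriv Φ) s = 0 ∧
      4 * τ * ((n : ℝ) - 1) * Φ s * deriv Φ s
        + (Φ s * deriv (deriv Φ) s - ((n : ℝ) - 1) * deriv Φ s ^ 2) * (4 * τ * s + Λ) = lam := by
  have hF' : deriv F s = 0 := by rw [hF.deriv_eq, deriv_const]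
  have hF'' : deriv (deriv F) s = 0 := by rw [hF.deriv.deriv_eq, deriv_const', deriv_const]
  rw [ReducedODE, hF', hF'']
  ring_nf

theorem deriv_deriv_eq_zero (h : ReducedODE n τ Λ lam Φ F s) (hn : n ≠ 2)
    (hF : F =ᶠ[𝓝 s] fun _ => c) : deriv (deriv Φ) s = 0 := by
  have hn' : (n : ℝ) - 2 ≠ 0 := sub_ne_zero.2 (by exact_mod_cast hn)
  exact (mul_eq_zero.1 ((iff_of_eventuallyEq_const hF).1 h).1).resolve_left hn'

theorem iff_of_eventuallyEq_affine {b₁ b₂ : ℝ} (hΦ : Φ =ᶠ[𝓝 s] fun x => b₁ * x + b₂)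
    (hF : F =ᶠ[𝓝 s] fun _ => c) :
    ReducedODE n τ Λ lam Φ F s ↔ lam = ((n : ℝ) - 1) * b₁ * (4 * τ * b₂ - b₁ * Λ) := by
  have hderiv : deriv (fun x => b₁ * x + b₂) = fun _ => b₁ := by
    ext x
    simp
  have hΦ' : deriv Φ s = b₁ := by rw [hΦ.deriv_eq, hderiv]
  have hΦ'' : deriv (deriv Φ) s = 0 := by rw [hΦ.deriv.deriv_eq, hderiv, deriv_const]
  rw [iff_of_eventuallyEq_const hF, hΦ', hΦ'', hΦ.eq_of_nhds, mul_zero, eq_self, true_and,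
    eq_comm]
  ring_nf

end ReducedODE

theorem stmt_12_general {n : ℕ} (hn : n ≠ 2) {U : Set ℝ} (hU : IsOpen U) (hU' : IsConnected U)
    {τ lam Λ : ℝ} {Φ F : ℝ → ℝ} (hΦ : DifferentiableOn ℝ Φ U)
    (hΦ' : DifferentiableOn ℝ (deriv Φ) U) {c : ℝ} (hF : U.EqOn F fun _ => c)
    (hODE : ∀ s ∈ U, ReducedODE n τ Λ lam Φ F s) :
    ∃ b₁ b₂ : ℝ, (∀ s ∈ U, Φ s = b₁ * s + b₂) ∧
      lam = ((n : ℝ) - 1) * b₁ * (4 * τ * b₂ - b₁ * Λ) := by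
  have hF_near : ∀ s ∈ U, F =ᶠ[𝓝 s] fun _ => c := fun s hs =>
    hF.eventuallyEq_of_mem (hU.mem_nhds hs)
  obtain ⟨b₁, b₂, hb⟩ := exists_eqOn_smul_add_of_deriv_deriv_eq_zero hU hU'.isPreconnected hΦ hΦ'
    fun s hs => (hODE s hs).deriv_deriv_eq_zero hn (hF_near s hs)
  have hΦ_affine : U.EqOn Φ fun s => b₁ * s + b₂ := fun s hs => by
    simpa only [smul_eq_mul, mul_comm] using hb hs
  obtain ⟨s, hs⟩ := hU'.nonempty
  exact ⟨b₁, b₂, hΦ_affine, (ReducedODE.iff_of_eventuallyEq_affine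
    (hΦ_affine.eventuallyEq_of_mem (hU.mem_nhds hs)) (hF_near s hs)).1 (hODE s hs)⟩

/-- Solitons with constant potential function have linear conformal factor (hence constant
curvature): if `F` is constant and `(Φ, F)` solves the reduced ODE system on an interval,
then `Φ(s) = b₁ s + b₂` and `λ = (n−1)·b₁·(4τ b₂ − b₁ Λ)`. -/
theorem stmt_12 (n : ℕ) (hn : 3 ≤ n) (a b : ℝ) (hab : a < b)
    (τ lam Λ : ℝ)
    (Φ F : ℝ → ℝ) (hΦ : ContDiffOn ℝ (⊤ : ℕ∞) Φ (Set.Ioo a b))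
    (c : ℝ) (hF : ∀ s, F s = c)
    (hODE : ∀ s ∈ Set.Ioo a b, ReducedODE n τ Λ lam Φ F s) :
    ∃ b₁ b₂ : ℝ, (∀ s ∈ Set.Ioo a b, Φ s = b₁ * s + b₂) ∧
      lam = ((n : ℝ) - 1) * b₁ * (4 * τ * b₂ - b₁ * Λ) := by
  have hΦ' := ((contDiffOn_infty_iff_deriv_of_isOpen isOpen_Ioo).1 hΦ).2
  exact stmt_12_general (by lia) isOpen_Ioo (isConnected_Ioo hab) (hΦ.differentiableOn (by simp))
    (hΦ'.differentiableOn (by simp)) (fun s _ => hF s) hODE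
end

section
/- Let n ≥ 2 and let I ⊆ ℝ be a nonempty open interval. Let Φ, F : I → ℝ be smooth with Φ(s) > 0 for all s ∈ I, satisfying both (n−2)Φ''(s) + Φ(s)F''(s) + 2Φ'(s)F'(s) = 0 and 2n·Φ''(s) + Φ(s)·F''(s) = 0 for all s ∈ I. Then the function s ↦ Φ(s)^{4n/(n+2)}·F'(s) is constant on I; equivalently, there exists c₁ ∈ ℝ with F'(s) = c₁·Φ(s)^{−4n/(n+2)} for all s ∈ I. (Equation (18) in the proof of Theorem 1.3.) -/
/-!
Eliminating `Φ''` between the two equations gives `(n + 2) Φ F'' + 4 n Φ' F' = 0`. With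
`p = 4n / (n + 2)` this reads `p Φ' F' + Φ F'' = 0`, whose integrating factor is `Φ ^ (p - 1)`:
multiplying by it turns the left-hand side into `(Φ ^ p * F')'`.
-/

section RpowMul

variable {p : ℝ} {f g : ℝ → ℝ}

theorem hasDerivAt_rpow_const_mul {a b x : ℝ} (hf : HasDerivAt f a x) (hg : HasDerivAt g b x)
    (hx : f x ≠ 0) :
    HasDerivAt (fun y => f y ^ p * g y) (f x ^ (p - 1) * (p * a * g x + f x * b)) x := by
  have hpow : f x ^ p = f x ^ (p - 1) * f x := by
    rw [Real.rpow_sub_one hx, div_mul_cancel₀ _ hx]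
  refine ((hf.rpow_const (Or.inl hx)).mul hg).congr_deriv ?_
  rw [hpow]
  ring

theorem rpow_mul_eq_of_hasDerivAt {f' g' : ℝ → ℝ} {U : Set ℝ} (hU : IsOpen U)
    (hU' : IsPreconnected U)
    (hf : ∀ x ∈ U, HasDerivAt f (f' x) x) (hg : ∀ x ∈ U, HasDerivAt g (g' x) x)
    (hf0 : ∀ x ∈ U, f x ≠ 0) (hode : ∀ x ∈ U, p * f' x * g x + f x * g' x = 0)
    {x y : ℝ} (hx : x ∈ U) (hy : y ∈ U) :
    f x ^ p * g x = f y ^ p * g y := by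
  have hderiv : ∀ z ∈ U, HasDerivAt (fun w => f w ^ p * g w) 0 z := fun z hz => by
    simpa only [hode z hz, mul_zero] using
      hasDerivAt_rpow_const_mul (p := p) (hf z hz) (hg z hz) (hf0 z hz)
  exact hU.is_const_of_deriv_eq_zero hU'
    (fun z hz => (hderiv z hz).differentiableAt.differentiableWithinAt)
    (fun z hz => (hderiv z hz).deriv) hx hy

theorem exists_eq_mul_rpow_neg {α : Type*} {s : Set α} {u v : α → ℝ} (hu : ∀ x ∈ s, 0 < u x)
    (huv : ∀ x ∈ s, ∀ y ∈ s, u x ^ p * v x = u y ^ p * v y) :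
    ∃ c : ℝ, ∀ x ∈ s, v x = c * u x ^ (-p) := by
  obtain rfl | ⟨y, hy⟩ := s.eq_empty_or_nonempty
  · exact ⟨0, fun x hx => hx.elim⟩
  · refine ⟨u y ^ p * v y, fun x hx => ?_⟩
    rw [← huv x hx y hy, Real.rpow_neg (hu x hx).le, mul_right_comm,
      mul_inv_cancel₀ (Real.rpow_pos_of_pos (hu x hx) p).ne', one_mul]

end RpowMul

/-- Here `φ, φ₁, φ₂` stand for `Φ, Φ', Φ''` and `f₁, f₂` for `F', F''`. -/
theorem first_order_relation_of_reduced_soliton {K : Type*} [Field K] {n φ φ₁ φ₂ f₁ f₂ : K}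
    (hn : n + 2 ≠ 0) (h1 : (n - 2) * φ₂ + φ * f₂ + 2 * φ₁ * f₁ = 0)
    (h2 : 2 * n * φ₂ + φ * f₂ = 0) :
    4 * n / (n + 2) * φ₁ * f₁ + φ * f₂ = 0 := by
  field_simp
  linear_combination 2 * n * h1 - (n - 2) * h2

theorem stmt_13_general {n : ℝ} (hn : n + 2 ≠ 0) {U : Set ℝ} (hU : IsOpen U)
    (hU' : IsPreconnected U) {Φ F : ℝ → ℝ} (hΦ : ContDiffOn ℝ 2 Φ U) (hF : ContDiffOn ℝ 2 F U)
    (hΦpos : ∀ s ∈ U, 0 < Φ s)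
    (h1 : ∀ s ∈ U, (n - 2) * deriv (deriv Φ) s + Φ s * deriv (deriv F) s
      + 2 * deriv Φ s * deriv F s = 0)
    (h2 : ∀ s ∈ U, 2 * n * deriv (deriv Φ) s + Φ s * deriv (deriv F) s = 0) :
    (∀ s ∈ U, ∀ t ∈ U,
        Φ s ^ (4 * n / (n + 2)) * deriv F s = Φ t ^ (4 * n / (n + 2)) * deriv F t) ∧
      ∃ c₁ : ℝ, ∀ s ∈ U, deriv F s = c₁ * Φ s ^ (-(4 * n) / (n + 2)) := by
  have hΦ' : ∀ s ∈ U, HasDerivAt Φ (deriv Φ s) s := fun s hs =>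
    ((hΦ.differentiableOn two_ne_zero).differentiableAt (hU.mem_nhds hs)).hasDerivAt
  have hF'C1 : ContDiffOn ℝ 1 (deriv F) U := hF.deriv_of_isOpen hU one_add_one_eq_two.le
  have hF'' : ∀ s ∈ U, HasDerivAt (deriv F) (deriv (deriv F) s) s := fun s hs =>
    ((hF'C1.differentiableOn one_ne_zero).differentiableAt (hU.mem_nhds hs)).hasDerivAt
  have hconst : ∀ s ∈ U, ∀ t ∈ U,
      Φ s ^ (4 * n / (n + 2)) * deriv F s = Φ t ^ (4 * n / (n + 2)) * deriv F t :=
    fun s hs t ht => rpow_mul_eq_of_hasDerivAt hU hU' hΦ' hF'' (fun x hx => (hΦpos x hx).ne')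
      (fun x hx => first_order_relation_of_reduced_soliton hn (h1 x hx) (h2 x hx)) hs ht
  refine ⟨hconst, ?_⟩
  simpa only [neg_div] using exists_eq_mul_rpow_neg hΦpos hconst

/-- **Equation (18)** in the proof of Theorem 1.3: under the constraint
`2nΦ'' + ΦF'' = 0`, the first reduced ODE integrates to `F' = c₁·Φ^{−4n/(n+2)}`. -/
theorem stmt_13 (n : ℕ) (hn : 2 ≤ n) (a b : ℝ) (hab : a < b)
    (Φ F : ℝ → ℝ)
    (hΦ : ContDiffOn ℝ (⊤ : ℕ∞) Φ (Set.Ioo a b)) (hF : ContDiffOn ℝ (⊤ : ℕ∞) F (Set.Ioo a b))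
    (hΦpos : ∀ s ∈ Set.Ioo a b, 0 < Φ s)
    (h1 : ∀ s ∈ Set.Ioo a b, ((n : ℝ) - 2) * deriv (deriv Φ) s
        + Φ s * deriv (deriv F) s + 2 * deriv Φ s * deriv F s = 0)
    (h2 : ∀ s ∈ Set.Ioo a b, 2 * (n : ℝ) * deriv (deriv Φ) s
        + Φ s * deriv (deriv F) s = 0) :
    (∀ s ∈ Set.Ioo a b, ∀ t ∈ Set.Ioo a b,
        (Φ s) ^ ((4 * (n : ℝ)) / ((n : ℝ) + 2)) * deriv F s
          = (Φ t) ^ ((4 * (n : ℝ)) / ((n : ℝ) + 2)) * deriv F t) ∧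
      ∃ c₁ : ℝ, ∀ s ∈ Set.Ioo a b,
        deriv F s = c₁ * (Φ s) ^ (-(4 * (n : ℝ)) / ((n : ℝ) + 2)) := by
  exact stmt_13_general (by positivity) isOpen_Ioo isPreconnected_Ioo
    (contDiffOn_infty.1 hΦ 2) (contDiffOn_infty.1 hF 2) hΦpos h1 h2
end

section
/- Let n ≥ 2, τ ≠ 0, λ, Λ ∈ ℝ, and let I ⊆ ℝ be a nonempty open interval on which 4τs + Λ is nowhere zero. Let Φ, F : I → ℝ be smooth with Φ(s) > 0 for all s ∈ I, and suppose Φ, F satisfy the reduced ODE system at every s ∈ I together with the constraint 2n·Φ''(s) + Φ(s)·F''(s) = 0. Then there exist constants c₁, c₂ ∈ ℝ such that, setting h = Φ², one has F'(s) = c₁·h(s)^{−2n/(n+2)} and (n−1)·h'(s) + c₁·h(s)^{−(n−2)/(n+2)} = c₂·(4τs + Λ) + λ/(2τ) for all s ∈ I. (Theorem 1.3, forward direction.) -/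
/-!
Eliminating `Φ''` between the first equation and the constraint gives `h F'' = p h' F'` with
`p = -2n / (n + 2)`, so that `F' h ^ (-p)` is constant.

For the second identity put `G = (n - 1) h' + h F'`. The constraint gives
`G' = -2 (Φ Φ'' - (n - 1) Φ'² - Φ Φ' F')`, which turns the second equation into
`(4 τ s + Λ) G' = 4 τ (G - λ / (2 τ))`. This is Euler's equation for functions homogeneous of degree
one in the distance to the zero of `4 τ s + Λ`, so `G - λ / (2 τ)` is a multiple of `4 τ s + Λ`.
That zero may lie in the interval: the constants on its two sides agree, both being the slope of
`G` there.
-/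

section Constancy

variable {E : Type*} [NormedAddCommGroup E] [NormedSpace ℝ E] [CompleteSpace E] {I S : Set ℝ}

theorem exists_eq_const_of_hasDerivAt_zero_off_countable (hI : I.OrdConnected) (hS : S.Countable)
    {g : ℝ → E} (hg : ContinuousOn g I) (hg' : ∀ s ∈ I \ S, HasDerivAt g 0 s) :
    ∃ c, ∀ s ∈ I, g s = c := by
  rcases I.eq_empty_or_nonempty with rfl | ⟨s₀, hs₀⟩
  · exact ⟨0, fun _ hs => hs.elim⟩
  refine ⟨g s₀, fun s hs => ?_⟩
  have hsub : Set.uIcc s₀ s ⊆ I := hI.uIcc_subset hs₀ hs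
  have hint := MeasureTheory.integral_eq_of_hasDerivAt_off_countable g (fun _ => 0) hS
    (hg.mono hsub) (fun t ht => hg' t ⟨hsub (Set.Ioo_subset_Icc_self ht.1), ht.2⟩) (by simp)
  rwa [intervalIntegral.integral_zero, eq_comm, sub_eq_zero] at hint

theorem exists_eq_sub_smul_of_sub_smul_deriv_eq (hI : I.OrdConnected) (x₀ : ℝ) {g g' : ℝ → E}
    (hg : ∀ s ∈ I, HasDerivAt g (g' s) s) (hEuler : ∀ s ∈ I, (s - x₀) • g' s = g s) :
    ∃ c, ∀ s ∈ I, g s = (s - x₀) • c := by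
  let quotient : ℝ → E := fun t => (t - x₀)⁻¹ • g t
  have hquotient : ∀ s ∈ I, s ≠ x₀ → HasDerivAt quotient 0 s := fun s hs hne => by
    have hne' : s - x₀ ≠ 0 := sub_ne_zero.mpr hne
    refine ((((hasDerivAt_id s).sub_const x₀).fun_inv hne').fun_smul (hg s hs)).congr_deriv ?_
    have hcoeff : (s - x₀)⁻¹ + -1 / (s - x₀) ^ 2 * (s - x₀) = 0 := by
      field_simp
      ring
    rw [← hEuler s hs, id, smul_smul, ← add_smul, hcoeff, zero_smul]
  have hextended : ∀ s ∈ I, ContinuousAt (Function.update quotient x₀ (g' x₀)) s := by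
    intro s hs
    rcases eq_or_ne s x₀ with rfl | hne
    · have hzero : g s = 0 := by simpa using (hEuler s hs).symm
      refine continuousAt_update_same.mpr ((hg s hs).tendsto_slope.congr fun t => ?_)
      simp only [slope, vsub_eq_sub, hzero, sub_zero, quotient]
    · exact (continuousAt_update_of_ne hne).mpr (hquotient s hs hne).continuousAt
  have hagree : ∀ s ≠ x₀, Function.update quotient x₀ (g' x₀) =ᶠ[nhds s] quotient := fun s hne =>
    (eventually_ne_nhds hne).mono fun _ ht => Function.update_of_ne ht _ _
  obtain ⟨c, hc⟩ := exists_eq_const_of_hasDerivAt_zero_off_countable hI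
    (Set.countable_singleton x₀) (fun s hs => (hextended s hs).continuousWithinAt)
    fun s ⟨hs, hne⟩ => (hquotient s hs hne).congr_of_eventuallyEq (hagree s hne)
  refine ⟨c, fun s hs => ?_⟩
  rcases eq_or_ne s x₀ with rfl | hne
  · simpa using (hEuler s hs).symm
  · rw [← hc s hs, Function.update_of_ne hne, smul_inv_smul₀ (sub_ne_zero.mpr hne)]

theorem exists_eq_mul_rpow_of_mul_deriv_eq (hI : I.OrdConnected) (p : ℝ) {h h' y y' : ℝ → ℝ}
    (hh : ∀ s ∈ I, HasDerivAt h (h' s) s) (hy : ∀ s ∈ I, HasDerivAt y (y' s) s)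
    (hpos : ∀ s ∈ I, 0 < h s) (heq : ∀ s ∈ I, h s * y' s = p * (h' s * y s)) :
    ∃ c, ∀ s ∈ I, y s = c * h s ^ p := by
  have hderiv : ∀ s ∈ I, HasDerivAt (fun t => y t * h t ^ (-p)) 0 s := fun s hs => by
    have hne : h s ≠ 0 := (hpos s hs).ne'
    refine ((hy s hs).fun_mul ((hh s hs).rpow_const (.inl hne))).congr_deriv ?_
    rw [Real.rpow_sub_one hne]
    field_simp
    linear_combination h s ^ (-p) * heq s hs
  obtain ⟨c, hc⟩ := exists_eq_const_of_hasDerivAt_zero_off_countable hI Set.countable_empty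
    (fun s hs => (hderiv s hs).continuousAt.continuousWithinAt) fun s hs => hderiv s hs.1
  refine ⟨c, fun s hs => ?_⟩
  rw [← hc s hs, mul_assoc, ← Real.rpow_add (hpos s hs), neg_add_cancel, Real.rpow_zero, mul_one]

end Constancy

theorem hasDerivAt_deriv_of_contDiffOn_two {𝕜 E : Type*} [NontriviallyNormedField 𝕜]
    [NormedAddCommGroup E] [NormedSpace 𝕜 E] {U : Set 𝕜} (hU : IsOpen U) {f : 𝕜 → E}
    (hf : ContDiffOn 𝕜 2 f U) :
    ∀ x ∈ U, HasDerivAt f (deriv f x) x ∧ HasDerivAt (deriv f) (deriv (deriv f) x) x := by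
  have hf' : ContDiffOn 𝕜 1 (deriv f) U := hf.deriv_of_isOpen hU (by norm_num)
  exact fun x hx => ⟨
    (hf.differentiableOn two_ne_zero).hasDerivAt (hU.mem_nhds hx),
    (hf'.differentiableOn one_ne_zero).hasDerivAt (hU.mem_nhds hx)⟩

section ReducedSystem

variable {n τ lam Λ : ℝ} {I : Set ℝ} {Φ Φ' Φ'' F' F'' : ℝ → ℝ}

theorem exists_eq_mul_sq_rpow_of_reduced_ode (hn : n + 2 ≠ 0) (hI : I.OrdConnected)
    (hΦ : ∀ s ∈ I, HasDerivAt Φ (Φ' s) s) (hF' : ∀ s ∈ I, HasDerivAt F' (F'' s) s)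
    (hΦ₀ : ∀ s ∈ I, Φ s ≠ 0)
    (hode : ∀ s ∈ I, (n - 2) * Φ'' s + Φ s * F'' s + 2 * Φ' s * F' s = 0)
    (hcon : ∀ s ∈ I, 2 * n * Φ'' s + Φ s * F'' s = 0) :
    ∃ c, ∀ s ∈ I, F' s = c * (Φ s ^ 2) ^ (-(2 * n) / (n + 2)) := by
  refine exists_eq_mul_rpow_of_mul_deriv_eq hI _ (fun s hs => (hΦ s hs).fun_pow 2) hF'
    (fun s hs => sq_pos_of_ne_zero (hΦ₀ s hs)) fun s hs => ?_
  have helim : (n + 2) * (Φ s * F'' s) = -(4 * n) * (Φ' s * F' s) := by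
    linear_combination 2 * n * hode s hs - (n - 2) * hcon s hs
  field_simp
  push_cast
  linear_combination Φ s * helim

/-- The quantity `(n - 1) h' + h F'` for `h = Φ²`, with `Φ'` and `F'` standing for the derivatives
of `Φ` and `F`. Up to an additive constant it is proportional to `4 τ s + Λ` along solutions. -/
def conformalFlux (n : ℝ) (Φ Φ' F' : ℝ → ℝ) (s : ℝ) : ℝ :=
  (n - 1) * (2 * Φ s * Φ' s) + Φ s ^ 2 * F' s

theorem hasDerivAt_conformalFlux {s : ℝ}
    (hΦ : HasDerivAt Φ (Φ' s) s) (hΦ' : HasDerivAt Φ' (Φ'' s) s) (hF' : HasDerivAt F' (F'' s) s)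
    (hcon : 2 * n * Φ'' s + Φ s * F'' s = 0) :
    HasDerivAt (conformalFlux n Φ Φ' F')
      (-2 * (Φ s * Φ'' s - (n - 1) * Φ' s ^ 2 - Φ s * Φ' s * F' s)) s := by
  refine ((((hΦ.const_mul 2).fun_mul hΦ').const_mul (n - 1)).fun_add
    ((hΦ.fun_pow 2).fun_mul hF')).congr_deriv ?_
  push_cast
  linear_combination Φ s * hcon

theorem exists_conformalFlux_eq_mul_add (hτ : τ ≠ 0) (hI : I.OrdConnected)
    (hΦ : ∀ s ∈ I, HasDerivAt Φ (Φ' s) s) (hΦ' : ∀ s ∈ I, HasDerivAt Φ' (Φ'' s) s)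
    (hF' : ∀ s ∈ I, HasDerivAt F' (F'' s) s)
    (hode : ∀ s ∈ I, 2 * τ * Φ s * (2 * (n - 1) * Φ' s + Φ s * F' s)
      + (Φ s * Φ'' s - (n - 1) * Φ' s ^ 2 - Φ s * Φ' s * F' s) * (4 * τ * s + Λ) = lam)
    (hcon : ∀ s ∈ I, 2 * n * Φ'' s + Φ s * F'' s = 0) :
    ∃ c, ∀ s ∈ I, conformalFlux n Φ Φ' F' s = c * (4 * τ * s + Λ) + lam / (2 * τ) := by
  obtain ⟨c, hc⟩ := exists_eq_sub_smul_of_sub_smul_deriv_eq hI (-Λ / (4 * τ))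
    (fun s hs => (hasDerivAt_conformalFlux (hΦ s hs) (hΦ' s hs) (hF' s hs)
      (hcon s hs)).sub_const (lam / (2 * τ))) fun s hs => by
        rw [smul_eq_mul, conformalFlux, ← hode s hs]
        field_simp
        ring
  refine ⟨c / (4 * τ), fun s hs => ?_⟩
  rw [← sub_eq_iff_eq_add, hc s hs, smul_eq_mul]
  field_simp
  ring

end ReducedSystem

theorem mul_rpow_neg_two_mul_div_add_two {n x : ℝ} (hn : n + 2 ≠ 0) (hx : 0 < x) :
    x * x ^ (-(2 * n) / (n + 2)) = x ^ (-(n - 2) / (n + 2)) := by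
  have hexp : -(n - 2) / (n + 2) = 1 + -(2 * n) / (n + 2) := by
    field_simp
    ring
  rw [hexp, Real.rpow_add hx, Real.rpow_one]

theorem stmt_16_general {n τ lam Λ : ℝ} (hn : n + 2 ≠ 0) (hτ : τ ≠ 0) {I : Set ℝ}
    (hI : I.OrdConnected) {Φ Φ' Φ'' F F' F'' : ℝ → ℝ}
    (hΦ : ∀ s ∈ I, HasDerivAt Φ (Φ' s) s) (hΦ' : ∀ s ∈ I, HasDerivAt Φ' (Φ'' s) s)
    (hF : ∀ s ∈ I, HasDerivAt F (F' s) s) (hF' : ∀ s ∈ I, HasDerivAt F' (F'' s) s)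
    (hΦ₀ : ∀ s ∈ I, Φ s ≠ 0)
    (hode₁ : ∀ s ∈ I, (n - 2) * Φ'' s + Φ s * F'' s + 2 * Φ' s * F' s = 0)
    (hode₂ : ∀ s ∈ I, 2 * τ * Φ s * (2 * (n - 1) * Φ' s + Φ s * F' s)
      + (Φ s * Φ'' s - (n - 1) * Φ' s ^ 2 - Φ s * Φ' s * F' s) * (4 * τ * s + Λ) = lam)
    (hcon : ∀ s ∈ I, 2 * n * Φ'' s + Φ s * F'' s = 0) :
    ∃ c₁ c₂ : ℝ, ∀ s ∈ I,
      deriv F s = c₁ * (Φ s ^ 2) ^ (-(2 * n) / (n + 2)) ∧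
      (n - 1) * deriv (fun t => Φ t ^ 2) s + c₁ * (Φ s ^ 2) ^ (-(n - 2) / (n + 2))
        = c₂ * (4 * τ * s + Λ) + lam / (2 * τ) := by
  obtain ⟨c₁, hc₁⟩ := exists_eq_mul_sq_rpow_of_reduced_ode hn hI hΦ hF' hΦ₀ hode₁ hcon
  obtain ⟨c₂, hc₂⟩ := exists_conformalFlux_eq_mul_add hτ hI hΦ hΦ' hF' hode₂ hcon
  refine ⟨c₁, c₂, fun s hs => ⟨(hF s hs).deriv.trans (hc₁ s hs), ?_⟩⟩
  have hsq : deriv (fun t => Φ t ^ 2) s = 2 * Φ s * Φ' s := by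
    simpa using ((hΦ s hs).fun_pow 2).deriv
  have hpow : c₁ * (Φ s ^ 2) ^ (-(n - 2) / (n + 2)) = Φ s ^ 2 * F' s := by
    rw [hc₁ s hs, ← mul_rpow_neg_two_mul_div_add_two hn (sq_pos_of_ne_zero (hΦ₀ s hs)),
      mul_left_comm]
  rw [hsq, hpow, ← hc₂ s hs, conformalFlux]

/-- **Theorem 1.3, forward direction.** A solution of the reduced ODE system satisfying
the constraint `2nΦ'' + ΦF'' = 0` satisfies, with `h = Φ²`:
`F' = c₁·h^{−2n/(n+2)}` and `(n−1)h' + c₁·h^{−(n−2)/(n+2)} = c₂(4τs+Λ) + λ/(2τ)`. -/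
theorem stmt_16 (n : ℕ) (hn : 2 ≤ n) (τ lam Λ : ℝ) (hτ : τ ≠ 0)
    (a b : ℝ) (hab : a < b)
    (hT : ∀ s ∈ Set.Ioo a b, 4 * τ * s + Λ ≠ 0)
    (Φ F : ℝ → ℝ)
    (hΦ : ContDiffOn ℝ (⊤ : ℕ∞) Φ (Set.Ioo a b)) (hF : ContDiffOn ℝ (⊤ : ℕ∞) F (Set.Ioo a b))
    (hΦpos : ∀ s ∈ Set.Ioo a b, 0 < Φ s)
    (hODE : ∀ s ∈ Set.Ioo a b, ReducedODE n τ Λ lam Φ F s)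
    (hcon : ∀ s ∈ Set.Ioo a b, 2 * (n : ℝ) * deriv (deriv Φ) s
        + Φ s * deriv (deriv F) s = 0) :
    ∃ c₁ c₂ : ℝ, ∀ s ∈ Set.Ioo a b,
      deriv F s = c₁ * ((Φ s) ^ 2) ^ (-(2 * (n : ℝ)) / ((n : ℝ) + 2)) ∧
      ((n : ℝ) - 1) * deriv (fun t => (Φ t) ^ 2) s
          + c₁ * ((Φ s) ^ 2) ^ (-(((n : ℝ) - 2)) / ((n : ℝ) + 2))
        = c₂ * (4 * τ * s + Λ) + lam / (2 * τ) := by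
  have hΦ₂ := hasDerivAt_deriv_of_contDiffOn_two isOpen_Ioo (hΦ.of_le ENat.LEInfty.out)
  have hF₂ := hasDerivAt_deriv_of_contDiffOn_two isOpen_Ioo (hF.of_le ENat.LEInfty.out)
  exact stmt_16_general (by positivity) hτ Set.ordConnected_Ioo (fun s hs => (hΦ₂ s hs).1)
    (fun s hs => (hΦ₂ s hs).2) (fun s hs => (hF₂ s hs).1) (fun s hs => (hF₂ s hs).2)
    (fun s hs => (hΦpos s hs).ne') (fun s hs => (hODE s hs).1) (fun s hs => (hODE s hs).2) hcon
end
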